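/- arXiv:2503.23016 — 3 statements merged into one kernel-verified Lean document; each statement's English description precedes it below -/
import Mathlib

section
/- Let f : ℝ^d → ℝ^N be differentiable at θ, let Φ : ℝ^N → ℝ be differentiable at f(θ), and let q ∈ ℝ^N. Set e := ∇Φ(f(θ)) − q (the distribution fitting error vector, with fitting error ‖e‖₂²), let J := J_f(θ) be the Jacobian of f at θ, let A := J Jᵀ be the N × N structural matrix whose (i,j) entry is the inner product of the gradients of the i-th and j-th coordinate functions of f at θ, and let g := ∇_θ [Φ(f(θ)) − ⟨q, f(θ)⟩] be the gradient of the loss with respect to the parameters. Then λ_min(A)·‖e‖₂² ≤ ‖g‖₂² ≤ λ_max(A)·‖e‖₂². -/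
open Finset Matrix

/-!
By the chain rule the loss gradient is `g = Jᵀ e`, so `‖g‖² = ⟪e, J Jᵀ e⟫ = ⟪e, A e⟫`.
In an orthonormal eigenbasis of `A` this quadratic form is `∑ i, λᵢ yᵢ²` with `∑ i, yᵢ² = ‖e‖²`,
and it is therefore bounded by the extreme eigenvalues times `‖e‖²`.
-/

/-- Diagonalisation of a real quadratic form; the witness `y` is the coordinate vector of `v`
in an orthonormal eigenbasis of `A`. -/
lemma exists_eigen_coords {n : ℕ} {A : Matrix (Fin n) (Fin n) ℝ} (hA : A.IsHermitian)
    (v : Fin n → ℝ) :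
    ∃ y : Fin n → ℝ, ∑ i, y i ^ 2 = ∑ i, v i ^ 2 ∧
      v ⬝ᵥ (A *ᵥ v) = ∑ i, hA.eigenvalues i * y i ^ 2 := by
  set U : Matrix (Fin n) (Fin n) ℝ := (hA.eigenvectorUnitary : Matrix (Fin n) (Fin n) ℝ) with hU
  have hUU : U * Uᵀ = 1 := by
    have h := Unitary.coe_mul_star_self hA.eigenvectorUnitary
    rwa [Unitary.coe_star, star_eq_conjTranspose, conjTranspose_eq_transpose_of_trivial] at h
  have hspec : A = U * diagonal hA.eigenvalues * Uᵀ := by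
    have h := hA.spectral_theorem
    rw [Unitary.conjStarAlgAut_apply, star_eq_conjTranspose,
      conjTranspose_eq_transpose_of_trivial] at h
    exact h
  refine ⟨Uᵀ *ᵥ v, ?_, ?_⟩
  · have h : (Uᵀ *ᵥ v) ⬝ᵥ (Uᵀ *ᵥ v) = v ⬝ᵥ v := by
      rw [dotProduct_mulVec, vecMul_transpose, mulVec_mulVec, hUU, one_mulVec]
    simpa only [dotProduct, ← sq] using h
  · have h : v ⬝ᵥ (A *ᵥ v) = (Uᵀ *ᵥ v) ⬝ᵥ (diagonal hA.eigenvalues *ᵥ (Uᵀ *ᵥ v)) := by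
      conv_lhs => rw [hspec]
      rw [← mulVec_mulVec, ← mulVec_mulVec, dotProduct_mulVec, ← mulVec_transpose]
    rw [h]
    simp only [dotProduct, mulVec_diagonal]
    exact Finset.sum_congr rfl fun i _ => by ring

/-- The chain rule for the loss `Φ (f θ) - ⟨q, f θ⟩`: its gradient is `Jᵀ e`. -/
lemma fderiv_loss_apply {d N : ℕ} (f : (Fin d → ℝ) → (Fin N → ℝ)) (θ : Fin d → ℝ)
    (hf : DifferentiableAt ℝ f θ)
    (Φ : (Fin N → ℝ) → ℝ) (hΦ : DifferentiableAt ℝ Φ (f θ)) (q : Fin N → ℝ) (v : Fin d → ℝ) :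
    fderiv ℝ (fun θ' => Φ (f θ') - ∑ i, q i * f θ' i) θ v =
      ∑ i, fderiv ℝ f θ v i * (fderiv ℝ Φ (f θ) (Pi.single i 1) - q i) := by
  have h1 : HasFDerivAt (fun θ' => Φ (f θ')) ((fderiv ℝ Φ (f θ)).comp (fderiv ℝ f θ)) θ :=
    hΦ.hasFDerivAt.comp θ hf.hasFDerivAt
  have h2 : HasFDerivAt (fun θ' => ∑ i, q i * f θ' i)
      (∑ i, q i • (ContinuousLinearMap.proj i).comp (fderiv ℝ f θ)) θ :=
    HasFDerivAt.fun_sum fun i _ => (hasFDerivAt_pi'.1 hf.hasFDerivAt i).const_mul (q i)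
  have h3 : fderiv ℝ Φ (f θ) (fderiv ℝ f θ v) =
      ∑ i, fderiv ℝ f θ v i * fderiv ℝ Φ (f θ) (Pi.single i 1) := by
    conv_lhs => rw [pi_eq_sum_univ' (fderiv ℝ f θ v)]
    rw [map_sum]
    refine Finset.sum_congr rfl fun i _ => ?_
    rw [map_smul, smul_eq_mul]
  rw [(h1.fun_sub h2).fderiv]
  simp [h3, mul_sub, Finset.sum_sub_distrib, mul_comm]

/-- The squared gradient norm of the loss is sandwiched between
`λ_min(A)‖e‖²` and `λ_max(A)‖e‖²`, where `A = J Jᵀ` is the structural matrix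
and `e = ∇Φ(f θ) − q` is the distribution fitting error vector. -/
theorem grad_norm_sq_bounds
    {d N : ℕ} (hN : 0 < N)
    (f : (Fin d → ℝ) → (Fin N → ℝ)) (θ : Fin d → ℝ)
    (hf : DifferentiableAt ℝ f θ)
    (Φ : (Fin N → ℝ) → ℝ) (hΦ : DifferentiableAt ℝ Φ (f θ))
    (q : Fin N → ℝ)
    (e : Fin N → ℝ)
    (he : ∀ i, e i = fderiv ℝ Φ (f θ) (Pi.single i 1) - q i)
    (J : Matrix (Fin N) (Fin d) ℝ)
    (hJ : ∀ i j, J i j = fderiv ℝ f θ (Pi.single j 1) i)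
    (A : Matrix (Fin N) (Fin N) ℝ) (hA : A = J * Jᵀ)
    (hAh : A.IsHermitian)
    (g : Fin d → ℝ)
    (hg : ∀ j, g j = fderiv ℝ (fun θ' => Φ (f θ') - ∑ i, q i * f θ' i) θ
      (Pi.single j 1)) :
    (⨅ i, hAh.eigenvalues i) * ∑ i, e i ^ 2 ≤ ∑ j, g j ^ 2 ∧
      ∑ j, g j ^ 2 ≤ (⨆ i, hAh.eigenvalues i) * ∑ i, e i ^ 2 := by
  have hgJ : g = Jᵀ *ᵥ e := by
    ext j
    rw [hg, fderiv_loss_apply f θ hf Φ hΦ q]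
    simp only [mulVec, dotProduct, transpose_apply, hJ, he]
  have hquad : ∑ j, g j ^ 2 = e ⬝ᵥ (A *ᵥ e) := by
    have h : g ⬝ᵥ g = e ⬝ᵥ (A *ᵥ e) := by
      rw [hgJ, hA, dotProduct_mulVec, vecMul_transpose, mulVec_mulVec, dotProduct_comm]
    simpa only [dotProduct, ← sq] using h
  obtain ⟨y, hy, hyA⟩ := exists_eigen_coords hAh e
  rw [hquad, hyA, ← hy, Finset.mul_sum, Finset.mul_sum]
  exact ⟨Finset.sum_le_sum fun i _ => mul_le_mul_of_nonneg_right
      (ciInf_le (Set.finite_range _).bddBelow i) (sq_nonneg _),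
    Finset.sum_le_sum fun i _ => mul_le_mul_of_nonneg_right
      (le_ciSup (Set.finite_range _).bddAbove i) (sq_nonneg _)⟩
end

section
/- Let f : ℝ^d → ℝ^N be differentiable at θ, let Φ : ℝ^N → ℝ be differentiable at f(θ), and let q ∈ ℝ^N. Set e := ∇Φ(f(θ)) − q, let A := J_f(θ) J_f(θ)ᵀ be the structural matrix, and let g := ∇_θ [Φ(f(θ)) − ⟨q, f(θ)⟩]. If λ_min(A) > 0 and e ≠ 0, then g ≠ 0 and −log λ_max(A) ≤ log(‖e‖₂² / ‖g‖₂²) ≤ −log λ_min(A); that is, L(A) ≤ log(‖e‖₂²/‖g‖₂²) ≤ U(A), where U(A) := −log λ_min(A) and L(A) := −log λ_max(A). -/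
/-!
The chain rule gives `g = Jᵀ e`, hence `‖g‖² = ⟨e, J Jᵀ e⟩ = ⟨e, A e⟩`. The Rayleigh bounds
`λ_min(A) ‖e‖² ≤ ⟨e, A e⟩ ≤ λ_max(A) ‖e‖²` then show that `‖g‖²` is positive and that `‖e‖² / ‖g‖²`
lies between `λ_max(A)⁻¹` and `λ_min(A)⁻¹`; the claim follows by taking logarithms. The Rayleigh
bounds `le_quadForm_of_le_eigenvalues` and `quadForm_le_of_eigenvalues_le` come from comparing `A` with
scalar matrices in the Loewner order, and the chain rule is `fderiv_objective_apply`.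
-/

open Finset Matrix Real

open scoped MatrixOrder in
/-- Lower Rayleigh bound: `c • 1 ≤ A` in the Loewner order because the spectrum of `A` is the range of
its eigenvalues. -/
theorem le_quadForm_of_le_eigenvalues {n : ℕ} (A : Matrix (Fin n) (Fin n) ℝ) (hA : A.IsHermitian) (c : ℝ)
    (x : Fin n → ℝ) (h : ∀ i, c ≤ hA.eigenvalues i) :
    c * ∑ i, x i ^ 2 ≤ x ⬝ᵥ (A *ᵥ x) := by
  have hs : algebraMap ℝ _ c ≤ A := by
    refine algebraMap_le_of_le_spectrum ?_ hA.isSelfAdjoint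
    rw [hA.spectrum_real_eq_range_eigenvalues]
    rintro _ ⟨i, rfl⟩
    exact h i
  have := (Matrix.le_iff.1 hs).dotProduct_mulVec_nonneg x
  simp [Matrix.sub_mulVec, Algebra.algebraMap_eq_smul_one, Matrix.smul_mulVec, dotProduct_sub] at this
  simpa [dotProduct, sq] using this

open scoped MatrixOrder in
/-- Upper Rayleigh bound: `A ≤ c • 1` in the Loewner order. -/
theorem quadForm_le_of_eigenvalues_le {n : ℕ} (A : Matrix (Fin n) (Fin n) ℝ) (hA : A.IsHermitian) (c : ℝ)
    (x : Fin n → ℝ) (h : ∀ i, hA.eigenvalues i ≤ c) :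
    x ⬝ᵥ (A *ᵥ x) ≤ c * ∑ i, x i ^ 2 := by
  have hs : A ≤ algebraMap ℝ _ c := by
    refine le_algebraMap_of_spectrum_le ?_ hA.isSelfAdjoint
    rw [hA.spectrum_real_eq_range_eigenvalues]
    rintro _ ⟨i, rfl⟩
    exact h i
  have := (Matrix.le_iff.1 hs).dotProduct_mulVec_nonneg x
  simp [Matrix.sub_mulVec, Algebra.algebraMap_eq_smul_one, Matrix.smul_mulVec, dotProduct_sub] at this
  simpa [dotProduct, sq] using this

/-- Chain rule for the objective: its derivative at `θ` in direction `v` pairs the fitting error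
`∇Φ(f θ) - q` with the directional derivative of `f`. -/
theorem fderiv_objective_apply {d N : ℕ}
    (f : (Fin d → ℝ) → (Fin N → ℝ)) (θ : Fin d → ℝ)
    (hf : DifferentiableAt ℝ f θ)
    (Φ : (Fin N → ℝ) → ℝ) (hΦ : DifferentiableAt ℝ Φ (f θ))
    (q : Fin N → ℝ) (v : Fin d → ℝ) :
    fderiv ℝ (fun θ' => Φ (f θ') - ∑ i, q i * f θ' i) θ v =
      ∑ i, (fderiv ℝ Φ (f θ) (Pi.single i 1) - q i) * fderiv ℝ f θ v i := by
  have h1 := hΦ.hasFDerivAt.comp θ hf.hasFDerivAt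
  have h2 : HasFDerivAt (fun θ' => ∑ i, q i * f θ' i)
      (∑ i, q i • (ContinuousLinearMap.proj i ∘L fderiv ℝ f θ)) θ :=
    HasFDerivAt.fun_sum fun i _ => ((hasFDerivAt_pi'.1 hf.hasFDerivAt) i).const_mul (q i)
  have h3 := (h1.sub h2).fderiv
  have h4 : fderiv ℝ Φ (f θ) (fderiv ℝ f θ v) =
      ∑ i, fderiv ℝ Φ (f θ) (Pi.single i 1) * fderiv ℝ f θ v i := by
    conv_lhs => rw [pi_eq_sum_univ' (fderiv ℝ f θ v), map_sum]
    refine Finset.sum_congr rfl fun i _ => ?_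
    rw [map_smul, smul_eq_mul, mul_comm]
  change fderiv ℝ (Φ ∘ f - fun θ' => ∑ i, q i * f θ' i) θ v = _
  rw [h3]
  simp [sub_mul, h4]

/-- If `λ_min(A) > 0` and the fitting error vector `e` is nonzero, then the
gradient `g` is nonzero and
`−log λ_max(A) ≤ log(‖e‖²/‖g‖²) ≤ −log λ_min(A)`. -/
theorem log_fitting_error_ratio_bounds
    {d N : ℕ} (hN : 0 < N)
    (f : (Fin d → ℝ) → (Fin N → ℝ)) (θ : Fin d → ℝ)
    (hf : DifferentiableAt ℝ f θ)
    (Φ : (Fin N → ℝ) → ℝ) (hΦ : DifferentiableAt ℝ Φ (f θ))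
    (q : Fin N → ℝ)
    (e : Fin N → ℝ)
    (he : ∀ i, e i = fderiv ℝ Φ (f θ) (Pi.single i 1) - q i)
    (J : Matrix (Fin N) (Fin d) ℝ)
    (hJ : ∀ i j, J i j = fderiv ℝ f θ (Pi.single j 1) i)
    (A : Matrix (Fin N) (Fin N) ℝ) (hA : A = J * Jᵀ)
    (hAh : A.IsHermitian)
    (g : Fin d → ℝ)
    (hg : ∀ j, g j = fderiv ℝ (fun θ' => Φ (f θ') - ∑ i, q i * f θ' i) θ
      (Pi.single j 1))
    (hmin : 0 < ⨅ i, hAh.eigenvalues i)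
    (he0 : e ≠ 0) :
    g ≠ 0 ∧
      -Real.log (⨆ i, hAh.eigenvalues i)
        ≤ Real.log ((∑ i, e i ^ 2) / ∑ j, g j ^ 2) ∧
      Real.log ((∑ i, e i ^ 2) / ∑ j, g j ^ 2)
        ≤ -Real.log (⨅ i, hAh.eigenvalues i) := by
  have hgJ : g = e ᵥ* J := by
    ext j
    rw [hg, fderiv_objective_apply f θ hf Φ hΦ]
    simp only [vecMul, dotProduct, he, hJ]
  have hG : ∑ j, g j ^ 2 = e ⬝ᵥ (A *ᵥ e) := by
    rw [hA, ← mulVec_mulVec, dotProduct_mulVec, mulVec_transpose, ← hgJ]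
    simp [dotProduct, sq]
  have hlo := le_quadForm_of_le_eigenvalues A hAh _ e fun i => ciInf_le (Set.finite_range hAh.eigenvalues).bddBelow i
  have hhi := quadForm_le_of_eigenvalues_le A hAh _ e fun i => le_ciSup (Set.finite_range hAh.eigenvalues).bddAbove i
  rw [← hG] at hlo hhi
  have hE : 0 < ∑ i, e i ^ 2 := by
    obtain ⟨i, hi⟩ := Function.ne_iff.1 he0
    exact Finset.sum_pos' (fun _ _ => sq_nonneg _) ⟨i, mem_univ i, sq_pos_iff.2 hi⟩
  have hGpos : 0 < ∑ j, g j ^ 2 := (mul_pos hmin hE).trans_le hlo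
  have hmax : 0 < ⨆ i, hAh.eigenvalues i := pos_of_mul_pos_left (hGpos.trans_le hhi) hE.le
  refine ⟨?_, ?_, ?_⟩
  · rintro rfl
    simp at hGpos
  · rw [← Real.log_inv]
    refine Real.log_le_log (inv_pos.2 hmax) ?_
    rw [le_div_iff₀ hGpos, inv_mul_le_iff₀ hmax]
    exact hhi
  · rw [← Real.log_inv]
    refine Real.log_le_log (div_pos hE hGpos) ?_
    rw [div_le_iff₀ hGpos, le_inv_mul_iff₀ hmin]
    exact hlo
end

section
/- Let m ≥ 2, ε > 0, and let n satisfy 2 ≤ n ≤ m − 1. Let g_1, …, g_n ∈ ℝ^m satisfy (1 − 2·log n/m)²·ε² ≤ ‖g_i‖₂² ≤ ε² for every i and |⟨g_i, g_j⟩| ≤ (√(6·log n)/√(m−1))·ε² for all i ≠ j, and let A be the n × n Gram matrix A_{ij} = ⟨g_i, g_j⟩. Then λ_max(A) − λ_min(A) ≤ (2n·√(6·log n)/√(m−1))·ε². -/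
/-!
By Gershgorin's theorem every eigenvalue of `A` lies within `(n - 1) δ` of some diagonal entry
`‖g k‖ ^ 2`, where `δ = √(6 log n) / √(m - 1) * ε ^ 2` bounds the off-diagonal entries. The diagonal
entries lie in `[(1 - t) ^ 2 * ε ^ 2, ε ^ 2]` with `t = 2 log n / m`, so the eigenvalue gap is at most
`(1 - (1 - t) ^ 2) * ε ^ 2 + 2 (n - 1) δ`. Finally `1 - (1 - t) ^ 2 ≤ 2 t`, and
`t ≤ √(6 log n) / √(m - 1)` (`two_log_div_le`) because `log n ≤ m`, so the first term is absorbed by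
the missing `2 δ`.
-/

open Finset
open scoped RealInnerProductSpace

lemma two_log_div_le {m n : ℕ} (hm : 2 ≤ m) (hn : 2 ≤ n) (hnm : n ≤ m - 1) :
    2 * Real.log n / m ≤ Real.sqrt (6 * Real.log n) / Real.sqrt ((m : ℝ) - 1) := by
  have hm' : (2 : ℝ) ≤ m := by exact_mod_cast hm
  have hn' : (2 : ℝ) ≤ n := by exact_mod_cast hn
  have hnm' : (n : ℝ) ≤ m := by exact_mod_cast hnm.trans (Nat.sub_le _ _)
  have hL : 0 ≤ Real.log n := Real.log_nonneg (by linarith)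
  have hLn : Real.log n ≤ m := by
    linarith [Real.log_le_sub_one_of_pos (show (0 : ℝ) < n by linarith)]
  rw [← Real.sqrt_div (by positivity)]
  apply Real.le_sqrt_of_sq_le
  rw [div_pow, div_le_div_iff₀ (by positivity) (by linarith)]
  -- The claim is `4 L ^ 2 (m - 1) ≤ 6 L m ^ 2`, where `L = log n` satisfies `L (m - 1) ≤ m ^ 2`.
  have h1 : Real.log n * ((m : ℝ) - 1) ≤ m * m :=
    mul_le_mul hLn (by linarith) (by linarith) (by linarith)
  have h2 := mul_le_mul_of_nonneg_left h1 hL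
  have h3 : 0 ≤ Real.log n * ((m : ℝ) * m) := by positivity
  nlinarith

/-- Gershgorin's theorem when all off-diagonal entries are bounded by the same `δ`. -/
lemma Matrix.IsHermitian.exists_abs_eigenvalues_sub_diag_le {n : ℕ}
    {A : Matrix (Fin n) (Fin n) ℝ} (hA : A.IsHermitian) {δ : ℝ}
    (hδ : ∀ i j, i ≠ j → |A i j| ≤ δ) (i : Fin n) :
    ∃ k, |hA.eigenvalues i - A k k| ≤ ((n : ℝ) - 1) * δ := by
  have hev : Module.End.HasEigenvalue (Matrix.toLin' A) (hA.eigenvalues i) := by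
    rw [Module.End.hasEigenvalue_iff_mem_spectrum, Matrix.spectrum_toLin']
    exact hA.eigenvalues_mem_spectrum_real i
  obtain ⟨k, hk⟩ := eigenvalue_mem_ball hev
  rw [Metric.mem_closedBall, Real.dist_eq] at hk
  refine ⟨k, hk.trans ?_⟩
  calc ∑ j ∈ univ.erase k, ‖A k j‖ ≤ ∑ _j ∈ univ.erase k, δ :=
        Finset.sum_le_sum fun j hj => hδ k j (Finset.ne_of_mem_erase hj).symm
    _ = ((n : ℝ) - 1) * δ := by
        have : 1 ≤ n := Fin.pos k
        simp [Finset.card_erase_of_mem, Nat.cast_sub this]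


/-- Eigenvalue-gap bound for the Gram matrix of nearly-orthogonal vectors:
`λ_max(A) − λ_min(A) ≤ (2n √(6 log n)/√(m−1)) ε²`. -/
theorem gram_eigenvalue_gap_bound
    {m n : ℕ} (hm : 2 ≤ m) (hn : 2 ≤ n) (hnm : n ≤ m - 1) (ε : ℝ) (hε : 0 < ε)
    (g : Fin n → EuclideanSpace ℝ (Fin m))
    (hnorm : ∀ i, (1 - 2 * Real.log n / m) ^ 2 * ε ^ 2 ≤ ‖g i‖ ^ 2 ∧
      ‖g i‖ ^ 2 ≤ ε ^ 2)
    (hcross : ∀ i j, i ≠ j →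
      |⟪g i, g j⟫| ≤ Real.sqrt (6 * Real.log n) / Real.sqrt ((m : ℝ) - 1) * ε ^ 2)
    (A : Matrix (Fin n) (Fin n) ℝ) (hAg : ∀ i j, A i j = ⟪g i, g j⟫)
    (hA : A.IsHermitian) :
    (⨆ i, hA.eigenvalues i) - (⨅ i, hA.eigenvalues i)
      ≤ 2 * n * Real.sqrt (6 * Real.log n) / Real.sqrt ((m : ℝ) - 1) * ε ^ 2 := by
  have : Nonempty (Fin n) := ⟨⟨0, by omega⟩⟩
  have hdiag : ∀ k, A k k = ‖g k‖ ^ 2 := fun k => by rw [hAg, real_inner_self_eq_norm_sq]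
  have hG := hA.exists_abs_eigenvalues_sub_diag_le
    (fun i j hij => by rw [hAg]; exact hcross i j hij)
  have ht := mul_le_mul_of_nonneg_right (two_log_div_le hm hn hnm) (sq_nonneg ε)
  set δ := Real.sqrt (6 * Real.log n) / Real.sqrt ((m : ℝ) - 1) * ε ^ 2 with hδ
  set t := 2 * Real.log n / (m : ℝ)
  have hsup : (⨆ i, hA.eigenvalues i) ≤ ε ^ 2 + ((n : ℝ) - 1) * δ := by
    refine ciSup_le fun i => ?_
    obtain ⟨k, hk⟩ := hG i
    rw [hdiag] at hk
    linarith [(abs_le.1 hk).2, (hnorm k).2]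
  have hinf : (1 - t) ^ 2 * ε ^ 2 - ((n : ℝ) - 1) * δ ≤ ⨅ i, hA.eigenvalues i := by
    refine le_ciInf fun i => ?_
    obtain ⟨k, hk⟩ := hG i
    rw [hdiag] at hk
    linarith [(abs_le.1 hk).1, (hnorm k).1]
  have hgoal : 2 * n * Real.sqrt (6 * Real.log n) / Real.sqrt ((m : ℝ) - 1) * ε ^ 2
      = 2 * n * δ := by
    rw [hδ]; ring
  rw [hgoal]
  have hsq : 0 ≤ t ^ 2 * ε ^ 2 := by positivity
  linarith
end
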